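/- Let K be a field of characteristic zero and P = Σ_{j=1}^k a_j X^{α_j}(uX+v)^{β_j} with u,v ≠ 0 and α_1 ≤ ... ≤ α_k. Suppose there exists ℓ with 1 ≤ ℓ < k such that α_{ℓ+1} > max_{1≤j≤ℓ} (α_j + (ℓ+1-j choose 2)). Then P = 0 if and only if both Q = Σ_{j=1}^ℓ a_j X^{α_j}(uX+v)^{β_j} = 0 and R = Σ_{j=ℓ+1}^k a_j X^{α_j}(uX+v)^{β_j} = 0. -/

import Mathlib

open Polynomial

/-!
Let `W` be the Wronskian of `f 1, …, f m`. By Cramer's rule, each product `W * c j` is a combination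
of the derivatives of `∑ j, c j • f j`, and `W ≠ 0` when the `f j` are linearly independent.
For `f j = X ^ α j * L ^ β j`, use the derivation `D = X * L * d/dX` instead of `d/dX`: it preserves
divisibility by powers of `X`, and `f j` divides each `D^[i] (f j)`, with a quotient of degree at
most `i * deg L`. Dividing each column `j` of the Wronskian matrix by `f j` leaves a nonzero
determinant `Δ` of degree at most `deg L * (m choose 2)` such that `X ^ n ∣ ∑ j, c j • f j` implies
`X ^ n ∣ Δ * (c j • f j)`. If `L(0) ≠ 0` and `c j ≠ 0`, this gives
`n ≤ α j + deg L * (m choose 2)`.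

If `P = Q + R = 0`, then `X ^ α_{ℓ+1}` divides `R`, hence `Q`. Were `Q` nonzero, it would be a
combination with nonzero coefficients of some linearly independent `f j`, and the bound at the
smallest index occurring in this combination would contradict the gap.
-/

open Matrix

section Derivation

variable {R A : Type*} [CommSemiring R] [CommRing A] [Algebra R A] (D : Derivation R A A)

lemma dvd_iterate_derivation {a b : A} (ha : a ∣ D a) (hab : a ∣ b) (i : ℕ) : a ∣ D^[i] b := by
  induction i with
  | zero => exact hab
  | succ i ih =>
    obtain ⟨c, hc⟩ := ih
    rw [Function.iterate_succ_apply', hc, D.leibniz, smul_eq_mul, smul_eq_mul]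
    exact dvd_add (Dvd.intro _ rfl) (ha.mul_left c)

lemma iterate_derivation_sum_smul {ι : Type*} (s : Finset ι) (c : ι → R) (f : ι → A) (i : ℕ) :
    D^[i] (∑ j ∈ s, c j • f j) = ∑ j ∈ s, c j • D^[i] (f j) := by
  have hpow : ⇑((D : A →ₗ[R] A) ^ i) = D^[i] := Module.End.coe_pow _ _
  simp only [← hpow, map_sum, map_smul]

variable {D}

lemma derivation_mul_of_eq_mul {a b g h : A} (ha : D a = a * g) (hb : D b = b * h) :
    D (a * b) = a * b * (g + h) := by
  rw [D.leibniz, ha, hb, smul_eq_mul, smul_eq_mul]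
  ring

lemma derivation_pow_of_eq_mul {a g : A} (ha : D a = a * g) (n : ℕ) :
    D (a ^ n) = a ^ n * (n * g) := by
  induction n with
  | zero => simp
  | succ n ih =>
    rw [pow_succ, derivation_mul_of_eq_mul ih ha]
    push_cast
    ring

end Derivation

section Wronskian

variable {R A : Type*} [CommRing R] [CommRing A] [Algebra R A]

/-- The Wronskian matrix of a family `f` for the derivation `D`: row `i` holds the `i`-th iterated
derivatives. `D` is arbitrary so that a derivation adapted to `f` can replace `d/dX`. -/
def wronskianMatrix {m : ℕ} (D : Derivation R A A) (f : Fin m → A) : Matrix (Fin m) (Fin m) A :=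
  .of fun i j => D^[i] (f j)

lemma sum_mul_derivation_sub_eq_zero {ι : Type*} {s : Finset ι} {D : Derivation R A A}
    {f q : ι → A} (h₀ : ∑ j ∈ s, f j * q j = 0) (h₁ : ∑ j ∈ s, D (f j) * q j = 0) (b : A) :
    ∑ j ∈ s, f j * (D (q j) * b - q j * D b) = 0 := by
  have hD : ∑ j ∈ s, f j * D (q j) = 0 := by
    have h := congrArg D h₀
    simp only [map_sum, map_zero, D.leibniz, smul_eq_mul, Finset.sum_add_distrib] at h
    rwa [Finset.sum_congr rfl fun j _ => mul_comm (q j) (D (f j)), h₁, add_zero] at h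
  calc ∑ j ∈ s, f j * (D (q j) * b - q j * D b)
      = (∑ j ∈ s, f j * D (q j)) * b - (∑ j ∈ s, f j * q j) * D b := by
        simp only [Finset.sum_mul, ← Finset.sum_sub_distrib]
        exact Finset.sum_congr rfl fun j _ => by ring
    _ = 0 := by rw [hD, h₀, zero_mul, zero_mul, sub_zero]

variable [IsDomain A]

-- `hD` says that an element `p / q` of the fraction field with derivative `0` lies in `R`.
lemma eq_zero_of_wronskianMatrix_mulVec_eq_zero {D : Derivation R A A}
    (hD : ∀ p q : A, q ≠ 0 → D p * q - p * D q = 0 → ∃ c : R, p = c • q) {m : ℕ} {f : Fin m → A}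
    (hf : LinearIndependent R f) {q : Fin m → A} (hq : wronskianMatrix D f *ᵥ q = 0) :
    q = 0 := by
  induction m with
  | zero => exact Subsingleton.elim _ _
  | succ m ih =>
    by_contra hne
    obtain ⟨j₀, hj₀⟩ := Function.ne_iff.1 hne
    have hrow (i : Fin (m + 1)) : ∑ j, D^[i] (f j) * q j = 0 := congrFun hq i
    -- `r j` is `q j₀ ^ 2` times the derivative of `q j / q j₀`.
    let r j := D (q j) * q j₀ - q j * D (q j₀)
    have hr₀ : r j₀ = 0 := by simp only [r]; ring
    have hr : r ∘ j₀.succAbove = 0 := by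
      refine ih (hf.comp j₀.succAbove Fin.succAbove_right_injective) (funext fun i => ?_)
      have hsum : ∑ j, D^[i] (f j) * r j = 0 :=
        sum_mul_derivation_sub_eq_zero (hrow i.castSucc)
          (by simpa only [Fin.val_succ, Fin.val_castSucc, Function.iterate_succ_apply']
            using hrow i.succ) _
      rwa [Fin.sum_univ_succAbove _ j₀, hr₀, mul_zero, zero_add] at hsum
    have hprop (j) : ∃ c : R, q j = c • q j₀ :=
      hD _ _ hj₀ (j₀.succAboveCases (α := fun j => r j = 0) hr₀ (congrFun hr) j)
    choose c hc using hprop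
    have hdep : ∑ j, c j • f j = 0 := by
      have h : (∑ j, c j • f j) * q j₀ = 0 := by
        rw [Finset.sum_mul, ← hrow 0]
        refine Finset.sum_congr rfl fun j _ => ?_
        rw [hc j, smul_mul_assoc, mul_smul_comm]
        rfl
      exact (mul_eq_zero.1 h).resolve_right hj₀
    exact hj₀ (by rw [hc j₀, Fintype.linearIndependent_iff.1 hf c hdep j₀, zero_smul]; rfl)

theorem det_wronskianMatrix_ne_zero {D : Derivation R A A}
    (hD : ∀ p q : A, q ≠ 0 → D p * q - p * D q = 0 → ∃ c : R, p = c • q) {m : ℕ} {f : Fin m → A}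
    (hf : LinearIndependent R f) : (wronskianMatrix D f).det ≠ 0 := by
  intro hdet
  obtain ⟨q, hq₀, hq⟩ := exists_mulVec_eq_zero_iff.2 hdet
  exact hq₀ (eq_zero_of_wronskianMatrix_mulVec_eq_zero hD hf hq)

end Wronskian

section Determinant

lemma dvd_det_mul_of_dvd_mulVec {ι A : Type*} [Fintype ι] [DecidableEq ι] [CommRing A]
    {M : Matrix ι ι A} {x : ι → A} {a : A} (h : ∀ i, a ∣ (M *ᵥ x) i) (j : ι) :
    a ∣ M.det * x j := by
  have hCramer : (M.adjugate *ᵥ (M *ᵥ x)) j = M.det * x j := by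
    rw [mulVec_mulVec, adjugate_mul, smul_mulVec, one_mulVec, Pi.smul_apply, smul_eq_mul]
  rw [← hCramer]
  exact Finset.dvd_sum fun i _ => (h i).mul_left _

lemma natDegree_det_le_mul_choose_two {R : Type*} [CommRing R] {m d : ℕ}
    {M : Matrix (Fin m) (Fin m) R[X]} (h : ∀ i j, (M i j).natDegree ≤ d * i) :
    M.det.natDegree ≤ d * m.choose 2 := by
  rw [← det_transpose, det_apply]
  refine natDegree_sum_le_of_forall_le _ _ fun σ _ => (natDegree_smul_le _ _).trans ?_
  calc (∏ i, Mᵀ (σ i) i).natDegree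
      ≤ ∑ i, (Mᵀ (σ i) i).natDegree := natDegree_prod_le _ _
    _ ≤ ∑ i : Fin m, d * i := Finset.sum_le_sum fun i _ => h i (σ i)
    _ = d * m.choose 2 := by
      rw [← Finset.mul_sum, Fin.sum_univ_eq_sum_range (fun i => i), Finset.sum_range_id,
        Nat.choose_two_right]

end Determinant

section PolynomialDerivation

lemma natDegree_mkDerivation_le {R : Type*} [CommSemiring R] {w : R[X]} {d : ℕ}
    (hw : w.natDegree ≤ d + 1) (p : R[X]) :
    (mkDerivation R w p).natDegree ≤ p.natDegree + d := by
  rw [mkDerivation_apply, smul_eq_mul]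
  by_cases hp : p.natDegree = 0
  · simp [derivative_of_natDegree_zero hp]
  · have hp' := natDegree_derivative_le p
    exact natDegree_mul_le.trans (by omega)

lemma natDegree_X_mul_derivative_le {R : Type*} [CommSemiring R] (p : R[X]) :
    (X * derivative p).natDegree ≤ p.natDegree := by
  simpa [mkDerivation_apply, mul_comm] using natDegree_mkDerivation_le (d := 0) natDegree_X_le p

lemma exists_iterate_derivation_eq_mul {R : Type*} [CommSemiring R]
    {D : Derivation R R[X] R[X]} {d : ℕ} (hD : ∀ p, (D p).natDegree ≤ p.natDegree + d)
    {f g : R[X]} (hg : g.natDegree ≤ d) (hf : D f = f * g) (i : ℕ) :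
    ∃ p : R[X], p.natDegree ≤ d * i ∧ D^[i] f = f * p := by
  induction i with
  | zero => exact ⟨1, by simp, by simp⟩
  | succ i ih =>
    obtain ⟨p, hp, hfp⟩ := ih
    refine ⟨D p + g * p, natDegree_add_le_of_degree_le ?_ ?_, ?_⟩
    · exact (hD p).trans (by rw [mul_add_one]; omega)
    · exact natDegree_mul_le.trans (by rw [mul_add_one]; omega)
    · rw [Function.iterate_succ_apply', hfp, D.leibniz, hf, smul_eq_mul, smul_eq_mul]
      ring

variable {K : Type*} [Field K] [CharZero K]

lemma exists_eq_smul_of_wronskian_eq_zero {p q : K[X]} (hq : q ≠ 0) (h : wronskian p q = 0) :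
    ∃ c : K, p = c • q := by
  obtain ⟨p', q', g, hcop, rfl, rfl⟩ := UniqueFactorizationMonoid.exists_reduced_factors' p q hq
  obtain ⟨hg, hq'⟩ := mul_ne_zero_iff.1 hq
  have hW : wronskian p' q' = 0 := by
    have hmul : wronskian (g * p') (g * q') = g * g * wronskian p' q' := by
      simp only [wronskian, derivative_mul]
      ring
    exact (mul_eq_zero.1 (hmul.symm.trans h)).resolve_left (mul_ne_zero hg hg)
  obtain ⟨hp_const, hq_const⟩ := hcop.isCoprime.wronskian_eq_zero_iff.1 hW
  obtain ⟨a, rfl⟩ : ∃ a, p' = C a := ⟨_, eq_C_of_derivative_eq_zero hp_const⟩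
  obtain ⟨b, rfl⟩ : ∃ b, q' = C b := ⟨_, eq_C_of_derivative_eq_zero hq_const⟩
  refine ⟨a / b, ?_⟩
  rw [smul_eq_C_mul, mul_left_comm, ← C_mul, div_mul_cancel₀ a (C_ne_zero.1 hq')]

lemma exists_eq_smul_of_mkDerivation_mul_sub_eq_zero {w : K[X]} (hw : w ≠ 0) {p q : K[X]}
    (hq : q ≠ 0) (h : mkDerivation K w p * q - p * mkDerivation K w q = 0) :
    ∃ c : K, p = c • q := by
  refine exists_eq_smul_of_wronskian_eq_zero hq ((mul_eq_zero.1 ?_).resolve_left (neg_ne_zero.2 hw))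
  rw [← h, mkDerivation_apply, mkDerivation_apply, wronskian, smul_eq_mul, smul_eq_mul]
  ring

lemma exists_ne_zero_dvd_mul_of_dvd_sum_smul {ι : Type*} [Fintype ι] {w : K[X]} (hw : w ≠ 0)
    {d : ℕ} (hwd : w.natDegree ≤ d + 1) {f g : ι → K[X]} (hf : LinearIndependent K f)
    (hfg : ∀ j, mkDerivation K w (f j) = f j * g j) (hg : ∀ j, (g j).natDegree ≤ d)
    {a : K[X]} (ha : a ∣ mkDerivation K w a) {c : ι → K} (hac : a ∣ ∑ j, c j • f j) :
    ∃ Δ : K[X], Δ ≠ 0 ∧ Δ.natDegree ≤ d * (Fintype.card ι).choose 2 ∧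
      ∀ j, a ∣ Δ * (c j • f j) := by
  let e := (Fintype.equivFin ι).symm
  choose p hpd hp using fun j i =>
    exists_iterate_derivation_eq_mul (natDegree_mkDerivation_le hwd) (hg j) (hfg j) i
  let M : Matrix (Fin (Fintype.card ι)) (Fin (Fintype.card ι)) K[X] := .of fun i j => p (e j) i
  have hfM : wronskianMatrix (mkDerivation K w) (f ∘ e) = .of fun i j => f (e j) * M i j :=
    Matrix.ext fun i j => hp (e j) i
  refine ⟨M.det, fun hM => ?_, natDegree_det_le_mul_choose_two fun i j => hpd _ _, fun j => ?_⟩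
  · refine det_wronskianMatrix_ne_zero
      (fun _ _ => exists_eq_smul_of_mkDerivation_mul_sub_eq_zero hw) (hf.comp e e.injective) ?_
    rw [hfM, det_mul_row, hM, mul_zero]
  · have hdvd (i) : a ∣ (M *ᵥ fun j => c (e j) • f (e j)) i := by
      have hM : (M *ᵥ fun j => c (e j) • f (e j)) i = (mkDerivation K w)^[i] (∑ j, c j • f j) :=
        calc (M *ᵥ fun j => c (e j) • f (e j)) i
            = ∑ j, p j i * (c j • f j) := e.sum_comp fun j => p j i * (c j • f j)
          _ = ∑ j, c j • (mkDerivation K w)^[i] (f j) :=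
            Finset.sum_congr rfl fun j _ => by rw [hp, mul_smul_comm, mul_comm]
          _ = _ := (iterate_derivation_sum_smul _ _ _ _ _).symm
      exact hM ▸ dvd_iterate_derivation _ ha hac i
    simpa using dvd_det_mul_of_dvd_mulVec hdvd (e.symm j)

end PolynomialDerivation

lemma exists_linearIndepOn_support_linearCombination_eq {ι K V : Type*} [DivisionRing K]
    [AddCommGroup V] [Module K V] {f : ι → V} {s : Set ι} {x : V}
    (hx : x ∈ Submodule.span K (f '' s)) :
    ∃ c : ι →₀ K, ↑c.support ⊆ s ∧ LinearIndepOn K f c.support ∧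
      Finsupp.linearCombination K f c = x := by
  obtain ⟨b, hbs, -, hspan, hb⟩ := exists_linearIndepOn_extension
    (linearIndepOn_empty K f) (Set.empty_subset s)
  obtain ⟨c, hcb, hcx⟩ := (Finsupp.mem_span_image_iff_linearCombination K).1
    (Submodule.span_le.2 hspan hx)
  exact ⟨c, hcb.trans hbs, hb.mono hcb, hcx⟩

section Valuation

lemma le_add_natDegree_of_X_pow_dvd_mul {R : Type*} [CommRing R] [IsDomain R] {L Δ : R[X]}
    (hL : L.coeff 0 ≠ 0) (hΔ : Δ ≠ 0) {c : R} (hc : c ≠ 0) {n a b : ℕ}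
    (h : X ^ n ∣ Δ * (c • (X ^ a * L ^ b))) : n ≤ a + Δ.natDegree := by
  have hXL : ¬ X ∣ C c * L ^ b := by
    rw [X_dvd_iff, coeff_C_mul, ← constantCoeff_apply, map_pow]
    exact mul_ne_zero hc (pow_ne_zero b hL)
  have hdvd : X ^ n ∣ X ^ a * Δ :=
    prime_X.pow_dvd_of_dvd_mul_right n hXL (by convert h using 1; rw [smul_eq_C_mul]; ring)
  simpa [natDegree_X_pow_mul, hΔ, add_comm] using
    natDegree_le_of_dvd hdvd (mul_ne_zero (pow_ne_zero a X_ne_zero) hΔ)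

variable {K : Type*} [Field K] [CharZero K]

theorem le_add_mul_choose_two_of_X_pow_dvd_sum {ι : Type*} [Fintype ι] {L : K[X]}
    (hL : L.coeff 0 ≠ 0) {α β : ι → ℕ} (hli : LinearIndependent K fun j => X ^ α j * L ^ β j)
    {c : ι → K} {n : ℕ} (hn : X ^ n ∣ ∑ j, c j • (X ^ α j * L ^ β j)) {j : ι} (hj : c j ≠ 0) :
    n ≤ α j + L.natDegree * (Fintype.card ι).choose 2 := by
  have hL₀ : L ≠ 0 := by rintro rfl; exact hL (coeff_zero 0)
  set D := mkDerivation K (X * L)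
  have hDX : D X = X * L := mkDerivation_X _ _
  have hDL : D L = L * (X * derivative L) := by
    rw [mkDerivation_apply, smul_eq_mul]
    ring
  have hdeg (a b : ℕ) :
      ((a : K[X]) * L + (b : K[X]) * (X * derivative L)).natDegree ≤ L.natDegree := by
    refine natDegree_add_le_of_degree_le ?_ ?_
    · simpa using natDegree_mul_le (p := (a : K[X])) (q := L)
    · simpa using natDegree_mul_le.trans
        (Nat.add_le_add_left (natDegree_X_mul_derivative_le L) (b : K[X]).natDegree)
  obtain ⟨Δ, hΔ₀, hΔ, hdvd⟩ := exists_ne_zero_dvd_mul_of_dvd_sum_smul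
    (mul_ne_zero X_ne_zero hL₀) (natDegree_X_mul hL₀).le hli
    (fun j => derivation_mul_of_eq_mul (derivation_pow_of_eq_mul hDX _)
      (derivation_pow_of_eq_mul hDL _))
    (fun j => hdeg _ _) (Dvd.intro _ (derivation_pow_of_eq_mul hDX n).symm) hn
  exact (le_add_natDegree_of_X_pow_dvd_mul hL hΔ₀ hj (hdvd j)).trans (Nat.add_le_add_left hΔ _)

theorem exists_le_add_mul_choose_two_of_X_pow_dvd_sum {ι : Type*} [LinearOrder ι] {L : K[X]}
    (hL : L.coeff 0 ≠ 0) {s : Finset ι} {α β : ι → ℕ} {c : ι → K}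
    (hne : ∑ j ∈ s, c j • (X ^ α j * L ^ β j) ≠ 0) {n : ℕ}
    (hn : X ^ n ∣ ∑ j ∈ s, c j • (X ^ α j * L ^ β j)) :
    ∃ j ∈ s, n ≤ α j + L.natDegree * (Finset.card {i ∈ s | j ≤ i}).choose 2 := by
  let f j := X ^ α j * L ^ β j
  have hspan : ∑ j ∈ s, c j • f j ∈ Submodule.span K (f '' s) :=
    Submodule.sum_mem _ fun j hj =>
      Submodule.smul_mem _ _ (Submodule.subset_span (Set.mem_image_of_mem f hj))
  obtain ⟨b, hbs, hli, hb⟩ := exists_linearIndepOn_support_linearCombination_eq hspan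
  have hsum : ∑ j : b.support, b j • f j = ∑ j ∈ s, c j • f j := by
    rw [← hb, Finsupp.linearCombination_apply, Finsupp.sum]
    exact Finset.sum_coe_sort b.support fun j => b j • f j
  have hsupp : b.support.Nonempty := by
    rw [Finsupp.support_nonempty_iff]
    rintro rfl
    exact hne (by rw [← hb, map_zero])
  let j := b.support.min' hsupp
  have hj : j ∈ b.support := b.support.min'_mem hsupp
  have hbound : n ≤ α j + L.natDegree * (Fintype.card b.support).choose 2 :=
    le_add_mul_choose_two_of_X_pow_dvd_sum hL hli (c := fun i => b i) (hsum ▸ hn) (j := ⟨j, hj⟩)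
      (Finsupp.mem_support_iff.1 hj)
  have hcard : Fintype.card b.support ≤ Finset.card {i ∈ s | j ≤ i} := by
    rw [Fintype.card_coe]
    exact Finset.card_le_card fun i hi =>
      Finset.mem_filter.2 ⟨hbs hi, b.support.min'_le i hi⟩
  exact ⟨j, hbs hj, hbound.trans (by gcongr)⟩

theorem sum_add_sum_eq_zero_iff_of_gap {ι : Type*} [LinearOrder ι] {L : K[X]}
    (hL : L.coeff 0 ≠ 0) {s t : Finset ι} {a : ι → K} {α β : ι → ℕ} {n : ℕ}
    (hs : ∀ j ∈ s, α j + L.natDegree * (Finset.card {i ∈ s | j ≤ i}).choose 2 < n)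
    (ht : ∀ j ∈ t, n ≤ α j) :
    ∑ j ∈ s, a j • (X ^ α j * L ^ β j) + ∑ j ∈ t, a j • (X ^ α j * L ^ β j) = 0 ↔
      ∑ j ∈ s, a j • (X ^ α j * L ^ β j) = 0 ∧ ∑ j ∈ t, a j • (X ^ α j * L ^ β j) = 0 := by
  refine ⟨fun h => ?_, fun ⟨hQ, hR⟩ => by rw [hQ, hR, add_zero]⟩
  have hR : X ^ n ∣ ∑ j ∈ t, a j • (X ^ α j * L ^ β j) :=
    Finset.dvd_sum fun j hj => dvd_smul_of_dvd _ ((pow_dvd_pow X (ht j hj)).mul_right _)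
  have hQ : ∑ j ∈ s, a j • (X ^ α j * L ^ β j) = 0 := by
    by_contra hne
    obtain ⟨j, hj, hle⟩ := exists_le_add_mul_choose_two_of_X_pow_dvd_sum hL hne
      (eq_neg_of_add_eq_zero_left h ▸ hR.neg_right)
    exact (hs j hj).not_ge hle
  exact ⟨hQ, by rwa [hQ, zero_add] at h⟩

end Valuation

theorem stmt6_general {K : Type*} [Field K] [CharZero K] (k ℓ : ℕ) (hℓk : ℓ < k)
    (a : Fin k → K) (α β : Fin k → ℕ) (hα : ∀ j : Fin k, ℓ ≤ (j : ℕ) → α ⟨ℓ, hℓk⟩ ≤ α j)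
    (L : K[X]) (hL : L.coeff 0 ≠ 0)
    (hgap : ∀ j : Fin k, (j : ℕ) < ℓ →
      α j + L.natDegree * (ℓ - (j : ℕ)).choose 2 < α ⟨ℓ, hℓk⟩) :
    (∑ j, C (a j) * X ^ (α j) * L ^ (β j)) = 0 ↔
      ((∑ j ∈ Finset.univ.filter (fun j : Fin k => (j : ℕ) < ℓ),
          C (a j) * X ^ (α j) * L ^ (β j)) = 0 ∧
       (∑ j ∈ Finset.univ.filter (fun j : Fin k => ℓ ≤ (j : ℕ)),
          C (a j) * X ^ (α j) * L ^ (β j)) = 0) := by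
  have hcard (j : Fin k) : Finset.card {i ∈ {i : Fin k | (i : ℕ) < ℓ} | j ≤ i} = ℓ - j := by
    rw [← Fin.card_Ico j ⟨ℓ, hℓk⟩]
    congr 1
    ext i
    simp [Fin.lt_def, and_comm]
  have key := sum_add_sum_eq_zero_iff_of_gap hL (s := {j : Fin k | (j : ℕ) < ℓ})
    (t := {j : Fin k | ℓ ≤ (j : ℕ)}) (a := a) (α := α) (β := β)
    (fun j hj => by simpa only [hcard] using hgap j (Finset.mem_filter.1 hj).2)
    (fun j hj => hα j (Finset.mem_filter.1 hj).2)
  simp only [smul_eq_C_mul, ← mul_assoc] at key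
  rw [← key]
  simp only [← not_lt, Finset.sum_filter_add_sum_filter_not]

theorem stmt6 {K : Type*} [Field K] [CharZero K] (k ℓ : ℕ)
    (hℓ1 : 1 ≤ ℓ) (hℓk : ℓ < k)
    (a : Fin k → K) (α β : Fin k → ℕ) (hα : Monotone α)
    (u v : K) (hu : u ≠ 0) (hv : v ≠ 0)
    (hgap : ∀ j : Fin k, (j : ℕ) < ℓ →
      α j + (ℓ - (j : ℕ)).choose 2 < α ⟨ℓ, hℓk⟩) :
    (∑ j, C (a j) * X ^ (α j) * (C u * X + C v) ^ (β j)) = 0 ↔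
      ((∑ j ∈ Finset.univ.filter (fun j : Fin k => (j : ℕ) < ℓ),
          C (a j) * X ^ (α j) * (C u * X + C v) ^ (β j)) = 0 ∧
       (∑ j ∈ Finset.univ.filter (fun j : Fin k => ℓ ≤ (j : ℕ)),
          C (a j) * X ^ (α j) * (C u * X + C v) ^ (β j)) = 0) :=
  stmt6_general k ℓ hℓk a α β (fun _ hj => hα hj) (C u * X + C v) (by simpa using hv)
    (by simpa only [natDegree_linear hu, one_mul] using hgap)
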